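/- Let N be a positive integer and q a complex number with 0 < |q| < 1. Then Σ_{n=0}^∞ q^n · (q^N;q)_n · (q^{1−N};q)_n / (q;q)_n = q^{N(N−1)}. (The sum is in fact finite: every term with n ≥ N vanishes, because (q^{1−N};q)_n = 0 for n ≥ N.) -/

import Mathlib

/-!
The sum is the case `c = 0`, `a = q ^ N`, `m = N - 1` of the q-Chu–Vandermonde formula, that is,
of `∑ₙ qⁿ (a;q)ₙ (q⁻ᵐ;q)ₙ / (q;q)ₙ = aᵐ` (`sum_qPoch`). Write `S m a` for the left-hand side.
From `(b;q)ₙ₊₁ - (bq;q)ₙ₊₁ = -b (1 - qⁿ⁺¹) (bq;q)ₙ` with `b = q⁻ᵐ⁻¹` and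
`(a;q)ₙ₊₁ = (1 - a) (aq;q)ₙ` one gets `S (m+1) a - S m a = -q⁻ᵐ (1 - a) S m (aq)`, and the
formula follows by induction on `m`, for all `a` simultaneously.
-/

open Finset

/-- Finite q-Pochhammer symbol `(a;q)_n`. -/
noncomputable def qPoch (a q : ℂ) (n : ℕ) : ℂ := ∏ j ∈ Finset.range n, (1 - a * q ^ j)

lemma qPoch_succ (a q : ℂ) (n : ℕ) : qPoch a q (n + 1) = qPoch a q n * (1 - a * q ^ n) :=
  Finset.prod_range_succ _ _

lemma qPoch_succ_left (a q : ℂ) (n : ℕ) :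
    qPoch a q (n + 1) = (1 - a) * qPoch (a * q) q n := by
  unfold qPoch
  rw [Finset.prod_range_succ', mul_comm]
  simp [pow_succ', mul_assoc]

lemma qPoch_succ_sub (b q : ℂ) (n : ℕ) :
    qPoch b q (n + 1) = qPoch (b * q) q (n + 1) - b * (1 - q ^ (n + 1)) * qPoch (b * q) q n := by
  rw [qPoch_succ_left, qPoch_succ]
  ring

lemma qPoch_inv_pow_eq_zero {q : ℂ} (hq : q ≠ 0) {m n : ℕ} (h : m < n) :
    qPoch ((q ^ m)⁻¹) q n = 0 :=
  Finset.prod_eq_zero (Finset.mem_range.2 h) (by simp [hq])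

/-- The q-Chu–Vandermonde formula with lower parameter `0`. The upper limit `M` may be any number
exceeding `m`, because the terms with `n > m` vanish; this freedom is what the induction uses. -/
lemma sum_qPoch {q : ℂ} (hq : q ≠ 0) (h1 : ∀ n : ℕ, 1 - q ^ (n + 1) ≠ 0) (m : ℕ) :
    ∀ (M : ℕ) (_ : m < M) (a : ℂ),
      ∑ n ∈ Finset.range M, q ^ n * qPoch a q n * qPoch ((q ^ m)⁻¹) q n / qPoch q q n
        = a ^ m := by
  have hP : ∀ n, qPoch q q n ≠ 0 := fun n =>
    Finset.prod_ne_zero_iff.2 fun j _ => by simpa [pow_succ'] using h1 j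
  induction m with
  | zero =>
    intro M hM a
    rw [Finset.sum_eq_single 0]
    · simp [qPoch]
    · intro n _ hn
      rw [qPoch_inv_pow_eq_zero hq (Nat.pos_of_ne_zero hn)]
      simp
    · simp
      omega
  | succ m ih =>
    intro M hM a
    obtain ⟨K, rfl⟩ : ∃ K, M = K + 1 := ⟨M - 1, by omega⟩
    have hb : (q ^ (m + 1))⁻¹ * q = (q ^ m)⁻¹ := by
      field_simp
      ring
    have e1 := ih (K + 1) (by omega) a
    have e2 := ih K (by omega) (a * q)
    rw [Finset.sum_range_succ'] at e1 ⊢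
    have key : ∀ n, q ^ (n + 1) * qPoch a q (n + 1) * qPoch ((q ^ (m + 1))⁻¹) q (n + 1)
          / qPoch q q (n + 1)
        = q ^ (n + 1) * qPoch a q (n + 1) * qPoch ((q ^ m)⁻¹) q (n + 1) / qPoch q q (n + 1)
          - (q ^ m)⁻¹ * (1 - a) *
            (q ^ n * qPoch (a * q) q n * qPoch ((q ^ m)⁻¹) q n / qPoch q q n) := by
      intro n
      have hn := h1 n
      have hPn := hP n
      have hs : qPoch q q (n + 1) = qPoch q q n * (1 - q ^ (n + 1)) := by
        rw [qPoch_succ, pow_succ']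
      rw [qPoch_succ_sub (q ^ (m + 1))⁻¹, hb, hs, qPoch_succ_left a, ← hb]
      generalize (q ^ (m + 1))⁻¹ = b
      field_simp
      ring
    rw [Finset.sum_congr rfl fun n _ => key n, Finset.sum_sub_distrib, ← Finset.mul_sum, e2]
    have z : ∀ c, qPoch c q 0 = 1 := fun c => by simp [qPoch]
    simp only [z] at e1 ⊢
    have h3 : (q ^ m)⁻¹ * (1 - a) * (a * q) ^ m = (1 - a) * a ^ m := by
      rw [mul_pow]
      field_simp
    rw [h3]
    linear_combination e1

/-- `Σ_{n≥0} q^n (q^N;q)_n (q^{1−N};q)_n / (q;q)_n = q^{N(N−1)}`; moreover the sum is in fact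
    finite since `(q^{1−N};q)_n = 0` for `n ≥ N`. -/
theorem statement6 (N : ℕ) (hN : 1 ≤ N) (q : ℂ) (hq0 : 0 < ‖q‖) (hq1 : ‖q‖ < 1) :
    (∀ n : ℕ, N ≤ n → qPoch (q ^ (1 - (N : ℤ))) q n = 0) ∧
    ∑' n : ℕ, q ^ n * qPoch (q ^ (N : ℤ)) q n * qPoch (q ^ (1 - (N : ℤ))) q n / qPoch q q n
      = q ^ (N * (N - 1)) := by
  have hq : q ≠ 0 := norm_pos_iff.1 hq0
  have h1 : ∀ n : ℕ, 1 - q ^ (n + 1) ≠ 0 := by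
    intro n h
    have h2 : ‖q‖ ^ (n + 1) = 1 := by
      rw [← norm_pow, ← sub_eq_zero.1 h, norm_one]
    exact (pow_lt_one₀ hq0.le hq1 n.succ_ne_zero).ne h2
  obtain ⟨m, rfl⟩ : ∃ m, N = m + 1 := ⟨N - 1, by omega⟩
  have hb : q ^ (1 - ((m + 1 : ℕ) : ℤ)) = (q ^ m)⁻¹ := by
    rw [← zpow_natCast, ← zpow_neg]
    congr 1
    push_cast
    ring
  have hz : ∀ n : ℕ, m + 1 ≤ n → qPoch (q ^ (1 - ((m + 1 : ℕ) : ℤ))) q n = 0 := by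
    intro n hn
    rw [hb]
    exact qPoch_inv_pow_eq_zero hq hn
  refine ⟨hz, ?_⟩
  rw [tsum_eq_sum (s := Finset.range (m + 1))]
  · rw [hb, sum_qPoch hq h1 m (m + 1) m.lt_succ_self, zpow_natCast, ← pow_mul, Nat.add_sub_cancel]
  · intro n hn
    rw [hz n (by simpa using hn)]
    simp
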